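/- MinHash is an LSH for cosine similarity: for binary data (nonempty finite sets), for any S0 ∈ (0,1] and c ∈ (0,1), MinHash satisfies both LSH conditions simultaneously: for any pair of nonempty sets W1, W2, if their cosine similarity S satisfies S ≥ S0 then the collision probability R ≥ S0², and if S ≤ cS0 then R ≤ cS0/(2 − cS0); moreover S0² > cS0/(2 − cS0) whenever S0(2 − cS0) > c. -/

import Mathlib

/-!
With `S` the cosine similarity and `R` the resemblance, everything follows from the comparison
`S ^ 2 ≤ R ≤ S / (2 - S)`. After cancelling `|W₁ ∩ W₂|`, the lower bound reads
`|W₁ ∩ W₂| * |W₁ ∪ W₂| ≤ |W₁| * |W₂|`, and the upper bound is the AM-GM inequality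
`2 * √(|W₁| * |W₂|) ≤ |W₁| + |W₂|`.
-/

theorem monotoneOn_div_sub {𝕜 : Type*} [Field 𝕜] [LinearOrder 𝕜] [IsStrictOrderedRing 𝕜] {a : 𝕜}
    (ha : 0 ≤ a) : MonotoneOn (fun x ↦ x / (a - x)) (Set.Iio a) := by
  intro x hx y hy hxy
  rw [div_le_div_iff₀ (sub_pos.2 hx) (sub_pos.2 hy)]
  linarith [mul_le_mul_of_nonneg_left hxy ha]

section Similarity

open Finset

variable {α : Type*} [DecidableEq α] {W₁ W₂ : Finset α}

/-- The cosine similarity `S` of the indicator vectors of two finite sets. The division gives `0`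
if one of the sets is empty. -/
noncomputable def cosineSimilarity (W₁ W₂ : Finset α) : ℝ :=
  (#(W₁ ∩ W₂) : ℝ) / √((#W₁ : ℝ) * (#W₂ : ℝ))

/-- The resemblance (Jaccard similarity) `R` of two finite sets, which is their MinHash collision
probability if they are nonempty. The division gives `0` if both sets are empty. -/
noncomputable def resemblance (W₁ W₂ : Finset α) : ℝ :=
  (#(W₁ ∩ W₂) : ℝ) / (#(W₁ ∪ W₂) : ℝ)

theorem card_inter_mul_card_union_le (W₁ W₂ : Finset α) :
    #(W₁ ∩ W₂) * #(W₁ ∪ W₂) ≤ #W₁ * #W₂ := by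
  obtain ⟨k, hk⟩ := Nat.exists_eq_add_of_le (card_le_card (inter_subset_left : W₁ ∩ W₂ ⊆ W₁))
  have h_union : #(W₁ ∪ W₂) = #W₂ + k := by
    have := card_union_add_card_inter W₁ W₂
    omega
  have h_inter : #(W₁ ∩ W₂) ≤ #W₂ := card_le_card inter_subset_right
  calc #(W₁ ∩ W₂) * #(W₁ ∪ W₂) = #(W₁ ∩ W₂) * #W₂ + k * #(W₁ ∩ W₂) := by rw [h_union]; ring
    _ ≤ #(W₁ ∩ W₂) * #W₂ + k * #W₂ := by gcongr
    _ = #W₁ * #W₂ := by rw [hk]; ring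

theorem cosineSimilarity_le_one (W₁ W₂ : Finset α) : cosineSimilarity W₁ W₂ ≤ 1 := by
  refine div_le_one_of_le₀ (Real.le_sqrt_of_sq_le ?_) (Real.sqrt_nonneg _)
  rw [sq]
  gcongr
  exacts [inter_subset_left, inter_subset_right]

theorem cosineSimilarity_sq_le_resemblance (h₁ : W₁.Nonempty) (h₂ : W₂.Nonempty) :
    cosineSimilarity W₁ W₂ ^ 2 ≤ resemblance W₁ W₂ := by
  have h_prod : (0 : ℝ) < #W₁ * #W₂ := by exact_mod_cast Nat.mul_pos h₁.card_pos h₂.card_pos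
  have h_union : (0 : ℝ) < #(W₁ ∪ W₂) := by exact_mod_cast (h₁.mono subset_union_left).card_pos
  have h_le : (#(W₁ ∩ W₂) : ℝ) * #(W₁ ∪ W₂) ≤ #W₁ * #W₂ := by
    exact_mod_cast card_inter_mul_card_union_le W₁ W₂
  rw [cosineSimilarity, resemblance, div_pow, Real.sq_sqrt h_prod.le,
    div_le_div_iff₀ h_prod h_union, sq, mul_assoc]
  gcongr

theorem resemblance_le_cosineSimilarity_div (h₁ : W₁.Nonempty) (h₂ : W₂.Nonempty) :
    resemblance W₁ W₂ ≤ cosineSimilarity W₁ W₂ / (2 - cosineSimilarity W₁ W₂) := by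
  set r := √((#W₁ : ℝ) * (#W₂ : ℝ)) with hr
  have h_prod : (0 : ℝ) < #W₁ * #W₂ := by exact_mod_cast Nat.mul_pos h₁.card_pos h₂.card_pos
  have hr_pos : 0 < r := Real.sqrt_pos.2 h_prod
  have h_inter : (#(W₁ ∩ W₂) : ℝ) ≤ r := (div_le_one hr_pos).1 (cosineSimilarity_le_one W₁ W₂)
  have am_gm : 2 * r ≤ #W₁ + #W₂ :=
    two_mul_le_add_of_sq_le_mul (by positivity) (by positivity) (Real.sq_sqrt h_prod.le).le
  calc resemblance W₁ W₂ = #(W₁ ∩ W₂) / (#W₁ + #W₂ - #(W₁ ∩ W₂)) := by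
        rw [resemblance, cast_card_union]
    _ ≤ #(W₁ ∩ W₂) / (2 * r - #(W₁ ∩ W₂)) := by
        gcongr
        linarith
    _ = cosineSimilarity W₁ W₂ / (2 - cosineSimilarity W₁ W₂) := by
        rw [cosineSimilarity, ← hr, ← mul_div_mul_right _ (2 - _) hr_pos.ne', sub_mul,
          div_mul_cancel₀ _ hr_pos.ne']

end Similarity

theorem minhash_is_lsh_for_cosine_general {α : Type*} [DecidableEq α] {S0 c : ℝ} (hS0 : 0 < S0)
    (hcS0 : c * S0 < 2) :
    (∀ W1 W2 : Finset α, W1.Nonempty → W2.Nonempty →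
      (S0 ≤ cosineSimilarity W1 W2 → S0 ^ 2 ≤ resemblance W1 W2) ∧
        (cosineSimilarity W1 W2 ≤ c * S0 → resemblance W1 W2 ≤ c * S0 / (2 - c * S0))) ∧
    (c < S0 * (2 - c * S0) → c * S0 / (2 - c * S0) < S0 ^ 2) := by
  refine ⟨fun W1 W2 h1 h2 ↦ ⟨fun h_ge ↦ ?_, fun h_le ↦ ?_⟩, fun h_gap ↦ ?_⟩
  · calc S0 ^ 2 ≤ cosineSimilarity W1 W2 ^ 2 := by gcongr
      _ ≤ resemblance W1 W2 := cosineSimilarity_sq_le_resemblance h1 h2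
  · calc resemblance W1 W2 ≤ cosineSimilarity W1 W2 / (2 - cosineSimilarity W1 W2) :=
          resemblance_le_cosineSimilarity_div h1 h2
      _ ≤ c * S0 / (2 - c * S0) := monotoneOn_div_sub zero_le_two (h_le.trans_lt hcS0) hcS0 h_le
  · rw [div_lt_iff₀ (sub_pos.2 hcS0)]
    calc c * S0 < S0 * (2 - c * S0) * S0 := by gcongr
      _ = S0 ^ 2 * (2 - c * S0) := by ring

/-- MinHash is an LSH for cosine similarity: for any `S0 ∈ (0,1]` and `c ∈ (0,1)`, for every
pair of nonempty sets, `S ≥ S0` implies the collision probability `R ≥ S0²` and `S ≤ c·S0`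
implies `R ≤ c·S0/(2 - c·S0)`; moreover `S0² > c·S0/(2 - c·S0)` whenever `S0(2 - c·S0) > c`. -/
theorem minhash_is_lsh_for_cosine (D : ℕ) (S0 c : ℝ)
    (hS0 : 0 < S0) (hS0' : S0 ≤ 1) (hc : 0 < c) (hc' : c < 1) :
    (∀ W1 W2 : Finset (Fin D), W1.Nonempty → W2.Nonempty →
      ((S0 ≤ ((W1 ∩ W2).card : ℝ) / Real.sqrt ((W1.card : ℝ) * (W2.card : ℝ)) →
          S0 ^ 2 ≤ ((W1 ∩ W2).card : ℝ) / ((W1 ∪ W2).card : ℝ)) ∧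
        (((W1 ∩ W2).card : ℝ) / Real.sqrt ((W1.card : ℝ) * (W2.card : ℝ)) ≤ c * S0 →
          ((W1 ∩ W2).card : ℝ) / ((W1 ∪ W2).card : ℝ) ≤ c * S0 / (2 - c * S0)))) ∧
    (S0 * (2 - c * S0) > c → c * S0 / (2 - c * S0) < S0 ^ 2) :=
  minhash_is_lsh_for_cosine_general hS0
    ((mul_lt_one_of_nonneg_of_lt_one_left hc.le hc' hS0').trans one_lt_two)
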